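/- arXiv:1210.3303 — 9 statements merged into one kernel-verified Lean document; each statement's English description precedes it below -/
import Mathlib

section
/- In a real normed vector space, for points a, b and radii r, s > 0, the convex hull of the union of the open ball of radius r centered at a and the open ball of radius s centered at b equals the union over t ∈ [0,1] of the open balls of radius (1−t)·r + t·s centered at a + t·(b − a). -/
/-!
Both balls are convex and nonempty, so the hull of their union is the union of the segments `[p, q]`
with `p ∈ ball a r`, `q ∈ ball b s`. A point `(1 - t) p + t q` of such a segment lies in the ball of
radius `(1 - t) r + t s` about `a + t (b - a)` by the triangle inequality. Conversely, a point of
that ball is `a + t (b - a) + ((1 - t) r + t s) u` with `‖u‖ < 1`, which is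
`(1 - t) (a + r u) + t (b + s u)`.
-/

theorem stmt_1 {E : Type*} [NormedAddCommGroup E] [NormedSpace ℝ E]
    (a b : E) (r s : ℝ) (hr : 0 < r) (hs : 0 < s) :
    convexHull ℝ (Metric.ball a r ∪ Metric.ball b s) =
      ⋃ t ∈ Set.Icc (0 : ℝ) 1, Metric.ball (a + t • (b - a)) ((1 - t) * r + t * s) := by
  -- Strict positivity of a convex combination of positive reals, needed for both inclusions.
  have pos : ∀ t ∈ Set.Icc (0 : ℝ) 1, ∀ x y : ℝ, 0 < x → 0 < y → 0 < (1 - t) * x + t * y := by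
    rintro t ⟨h0, h1⟩ x y hx hy
    exact convex_Ioi (0 : ℝ) hx hy (sub_nonneg.2 h1) h0 (by ring)
  rw [(convex_ball a r).convexHull_union (convex_ball b s) (Metric.nonempty_ball.2 hr)
    (Metric.nonempty_ball.2 hs)]
  ext x
  simp only [mem_convexJoin, Set.mem_iUnion, exists_prop, mem_ball_iff_norm]
  constructor
  · rintro ⟨p, hp, q, hq, α, t, hα, ht, hαt, rfl⟩
    obtain rfl : α = 1 - t := by linarith
    have htI : t ∈ Set.Icc (0 : ℝ) 1 := ⟨ht, by linarith⟩
    refine ⟨t, htI, ?_⟩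
    have h := pos t htI _ _ (sub_pos.2 hp) (sub_pos.2 hq)
    calc ‖(1 - t) • p + t • q - (a + t • (b - a))‖
        = ‖(1 - t) • (p - a) + t • (q - b)‖ := by congr 1; module
      _ ≤ ‖(1 - t) • (p - a)‖ + ‖t • (q - b)‖ := norm_add_le _ _
      _ = (1 - t) * ‖p - a‖ + t * ‖q - b‖ := by
        rw [norm_smul_of_nonneg hα, norm_smul_of_nonneg ht]
      _ < (1 - t) * r + t * s := by linarith
  · rintro ⟨t, ht, hx⟩
    have hρ := pos t ht r s hr hs
    set ρ := (1 - t) * r + t * s with hρ_def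
    obtain ⟨u, hu⟩ : ∃ u : E, x - (a + t • (b - a)) = ρ • u :=
      ⟨ρ⁻¹ • (x - (a + t • (b - a))), (smul_inv_smul₀ hρ.ne' _).symm⟩
    have hu1 : ‖u‖ < 1 := by
      rw [hu, norm_smul_of_nonneg hρ.le] at hx
      exact (mul_lt_iff_lt_one_right hρ).1 hx
    refine ⟨a + r • u, ?_, b + s • u, ?_, 1 - t, t, sub_nonneg.2 ht.2, ht.1, by ring, ?_⟩
    · rw [add_sub_cancel_left, norm_smul_of_nonneg hr.le]
      exact mul_lt_of_lt_one_right hr hu1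
    · rw [add_sub_cancel_left, norm_smul_of_nonneg hs.le]
      exact mul_lt_of_lt_one_right hs hu1
    · rw [sub_eq_iff_eq_add.1 hu, hρ_def]
      module
end

section
/- For every ε ≥ 0, the supremum over x ∈ S_ε of the distance infDist(x, S_εᶜ) from x to the complement of S_ε equals 1+ε; equivalently, the inradius of S_ε is 1+ε, so that the quantity Λ = (sup{r : some ball of radius r is contained in S_ε})⁻¹ equals 1/(1+ε). -/
/-!
`S ε` contains the open ball of radius `1 + ε` about `(-1, 0)`, and it lies in the open strip
`|y| < 1 + ε`, since the strip is convex and contains both generating balls. A ball inside a strip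
of half-width `1 + ε` has radius at most `1 + ε` (`radius_le`), so `1 + ε` is the largest radius of a
ball contained in `S ε`. The supremum of the distance to the complement is the same number: the ball
about `x` of radius `infDist x (S ε)ᶜ` is contained in `S ε`, and the value `1 + ε` is attained
at `(-1, 0)`.
-/

/-- The point `(a, b)` in the Euclidean plane. -/
noncomputable def pt (a b : ℝ) : EuclideanSpace ℝ (Fin 2) :=
  (WithLp.equiv 2 (Fin 2 → ℝ)).symm ![a, b]

/-- For `ε ≥ 0`, the set `S ε` is the convex hull of the union of the open ball of radius
`1 + ε` centered at `(-1, 0)` and the open ball of radius `1` centered at `(1, 0)`. -/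
noncomputable def S (ε : ℝ) : Set (EuclideanSpace ℝ (Fin 2)) :=
  convexHull ℝ (Metric.ball (pt (-1) 0) (1 + ε) ∪ Metric.ball (pt 1 0) 1)

theorem S_subset_strip (ε : ℝ) (hε : 0 ≤ ε) {x : EuclideanSpace ℝ (Fin 2)} (hx : x ∈ S ε) :
    -(1 + ε) < x 1 ∧ x 1 < 1 + ε := by
  have hconv : Convex ℝ ((EuclideanSpace.proj (𝕜 := ℝ) (1 : Fin 2) :
      EuclideanSpace ℝ (Fin 2) →L[ℝ] ℝ).toLinearMap ⁻¹' Set.Ioo (-(1 + ε)) (1 + ε)) :=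
    (convex_Ioo _ _).linear_preimage _
  have hsub := convexHull_min (s := Metric.ball (pt (-1) 0) (1 + ε) ∪ Metric.ball (pt 1 0) 1)
    ?_ hconv
  · exact hsub hx
  -- Both centers have second coordinate `0`, so `|y 1|` is at most the distance to the center.
  have key : ∀ (a : ℝ) (y : EuclideanSpace ℝ (Fin 2)), |y 1| ≤ dist y (pt a 0) := by
    intro a y
    have h := PiLp.norm_apply_le (y - pt a 0) 1
    rw [dist_eq_norm]
    simpa [pt] using h
  rintro y (hy | hy)
  · exact abs_lt.1 ((key _ y).trans_lt hy)
  · exact abs_lt.1 ((key _ y).trans_lt (lt_of_lt_of_le hy (by linarith)))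

theorem radius_le (ε : ℝ) (hε : 0 ≤ ε) (x : EuclideanSpace ℝ (Fin 2)) (r : ℝ)
    (h : Metric.ball x r ⊆ S ε) : r ≤ 1 + ε := by
  by_contra! hr
  -- The points at height `± (1 + ε)` above and below `x` cannot both lie in the strip.
  have hn : ‖pt 0 (1 + ε)‖ < r := by
    have : ‖pt 0 (1 + ε)‖ = 1 + ε := by
      simp [pt, EuclideanSpace.norm_eq, Real.sqrt_sq_eq_abs]
      linarith
    rwa [this]
  have h1 := (S_subset_strip ε hε (h (show x + pt 0 (1 + ε) ∈ Metric.ball x r by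
    simpa [Metric.mem_ball, dist_eq_norm] using hn))).2
  have h2 := (S_subset_strip ε hε (h (show x - pt 0 (1 + ε) ∈ Metric.ball x r by
    simpa [Metric.mem_ball, dist_eq_norm] using hn))).1
  simp [pt] at h1 h2
  linarith

theorem ball_subset_S (ε : ℝ) : Metric.ball (pt (-1) 0) (1 + ε) ⊆ S ε :=
  Set.subset_union_left.trans (subset_convexHull ℝ _)

theorem infDist_compl_le (ε : ℝ) (hε : 0 ≤ ε) (x : EuclideanSpace ℝ (Fin 2)) :
    Metric.infDist x (S ε)ᶜ ≤ 1 + ε := by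
  refine radius_le ε hε x _ fun y hy => ?_
  by_contra hyS
  refine Metric.notMem_of_dist_lt_infDist (s := (S ε)ᶜ) (x := x) (y := y) ?_ hyS
  rwa [dist_comm]

/-- Nonemptiness of the complement matters here, because `infDist` to the empty set is `0`. -/
theorem le_infDist_center (ε : ℝ) (hε : 0 ≤ ε) :
    1 + ε ≤ Metric.infDist (pt (-1) 0) (S ε)ᶜ := by
  have hne : (S ε)ᶜ.Nonempty := by
    refine ⟨pt 0 (1 + ε), fun hmem => ?_⟩
    have := (S_subset_strip ε hε hmem).2
    simp [pt] at this
  refine (Metric.le_infDist hne).2 fun y hy => ?_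
  by_contra! hlt
  exact hy (ball_subset_S ε (by rwa [Metric.mem_ball, dist_comm]))

theorem stmt_4 (ε : ℝ) (hε : 0 ≤ ε) :
    sSup ((fun x => Metric.infDist x (S ε)ᶜ) '' S ε) = 1 + ε ∧
      sSup {r : ℝ | ∃ x : EuclideanSpace ℝ (Fin 2), Metric.ball x r ⊆ S ε} = 1 + ε ∧
      (sSup {r : ℝ | ∃ x : EuclideanSpace ℝ (Fin 2), Metric.ball x r ⊆ S ε})⁻¹ = 1 / (1 + ε) := by
  have hrad : sSup {r : ℝ | ∃ x : EuclideanSpace ℝ (Fin 2), Metric.ball x r ⊆ S ε} = 1 + ε :=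
    IsGreatest.csSup_eq
      ⟨⟨pt (-1) 0, ball_subset_S ε⟩, fun r ⟨x, hx⟩ => radius_le ε hε x r hx⟩
  refine ⟨IsGreatest.csSup_eq ⟨⟨pt (-1) 0, ?_, ?_⟩, ?_⟩, hrad, ?_⟩
  · exact ball_subset_S ε (Metric.mem_ball_self (by linarith))
  · exact le_antisymm (infDist_compl_le ε hε _) (le_infDist_center ε hε)
  · rintro _ ⟨x, -, rfl⟩
    exact infDist_compl_le ε hε x
  · rw [hrad, one_div]
end

section
/- For every ε ≥ 0, the open ball of radius 1+ε centered at (-1,0) is contained in S_ε, and the distance from the point (-1,0) to the complement of S_ε equals 1+ε; that is, infDist((-1,0), S_εᶜ) = 1+ε. -/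
lemma abs_coord_sub_lt_of_mem_ball {x c : EuclideanSpace ℝ (Fin 2)} {r : ℝ}
    (hx : x ∈ Metric.ball c r) : |x 0 - c 0| < r := by
  have h := PiLp.norm_apply_le (x - c) 0
  rw [Metric.mem_ball, dist_eq_norm] at hx
  rw [Real.norm_eq_abs] at h
  exact lt_of_le_of_lt h hx

lemma S_subset_halfplane (ε : ℝ) (hε : 0 ≤ ε) :
    S ε ⊆ {x : EuclideanSpace ℝ (Fin 2) | -2 - ε < x 0} := by
  refine convexHull_min ?_ ?_
  · rintro x (hx | hx)
    all_goals
      have h := (abs_lt.1 (abs_coord_sub_lt_of_mem_ball hx)).1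
      simp only [pt, WithLp.equiv_symm_apply, Matrix.cons_val_zero] at h
      simp only [Set.mem_ofPred_eq]
      linarith
  · exact convex_halfSpace_gt (EuclideanSpace.proj (𝕜 := ℝ) (0 : Fin 2)).isLinear _

theorem stmt_5 (ε : ℝ) (hε : 0 ≤ ε) :
    Metric.ball (pt (-1) 0) (1 + ε) ⊆ S ε ∧
      Metric.infDist (pt (-1) 0) (S ε)ᶜ = 1 + ε := by
  have hball : Metric.ball (pt (-1) 0) (1 + ε) ⊆ S ε :=
    Set.subset_union_left.trans (subset_convexHull ℝ _)
  have hmem : pt (-2 - ε) 0 ∈ (S ε)ᶜ := fun h => by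
    have h := S_subset_halfplane ε hε h
    simp [pt] at h
  have hdist : dist (pt (-1) 0) (pt (-2 - ε) 0) = 1 + ε := by
    rw [EuclideanSpace.dist_eq]
    simp only [pt, WithLp.equiv_symm_apply, Fin.sum_univ_two, Matrix.cons_val_zero,
      Matrix.cons_val_one, Real.dist_eq, sq_abs]
    rw [show (-1 - (-2 - ε)) ^ 2 + ((0 : ℝ) - 0) ^ 2 = (1 + ε) ^ 2 by ring]
    exact Real.sqrt_sq (by linarith)
  refine ⟨hball, le_antisymm (hdist ▸ Metric.infDist_le_dist_of_mem hmem) ?_⟩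
  refine (Metric.le_infDist ⟨_, hmem⟩).2 fun y hy => ?_
  by_contra! hlt
  exact hy (hball (Metric.mem_ball'.2 hlt))
end

section
/- For every ε > 0, the high ridge of S_ε is the single point (-1,0); that is, {x ∈ S_ε : infDist(x, S_εᶜ) = 1+ε} = {(-1,0)}. Equivalently, for every x ∈ S_ε with x ≠ (-1,0) one has infDist(x, S_εᶜ) < 1+ε. -/
theorem pt_dist_lt_iff (y : EuclideanSpace ℝ (Fin 2)) (a r : ℝ) (hr : 0 < r) :
    dist y (pt a 0) < r ↔ (y 0 - a) ^ 2 + (y 1) ^ 2 < r ^ 2 := by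
  rw [EuclideanSpace.dist_eq, Real.sqrt_lt' hr]
  simp [pt, Fin.sum_univ_two, Real.dist_eq, sq_abs]

theorem inner_lt_of_sq_lt {a b p q r : ℝ} (hr : 0 < r) (h : a ^ 2 + b ^ 2 < r ^ 2)
    (hpq : p ^ 2 + q ^ 2 = 1) : a * p + b * q < r := by
  apply lt_of_pow_lt_pow_left₀ 2 hr.le
  have h1 : (a ^ 2 + b ^ 2) * (p ^ 2 + q ^ 2) = (a * p + b * q) ^ 2 + (a * q - b * p) ^ 2 := by
    ring
  rw [hpq] at h1
  nlinarith [sq_nonneg (a * q - b * p)]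

theorem S_subset_halfPlane {ε p q : ℝ} (hε : 0 < ε) (hpq : p ^ 2 + q ^ 2 = 1)
    (hp : p ≤ ε / 2) : S ε ⊆ {y | (y 0 + 1) * p + y 1 * q < 1 + ε} := by
  apply convexHull_min
  · rintro y (hy | hy)
    · rw [Metric.mem_ball, pt_dist_lt_iff _ _ _ (by linarith)] at hy
      have := inner_lt_of_sq_lt (by linarith) hy hpq
      simp only [Set.mem_ofPred_eq]
      linarith
    · rw [Metric.mem_ball, pt_dist_lt_iff _ _ _ one_pos] at hy
      have := inner_lt_of_sq_lt one_pos hy hpq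
      simp only [Set.mem_ofPred_eq]
      linarith
  · intro y hy z hz a b ha hb hab
    simp only [Set.mem_ofPred_eq] at hy hz ⊢
    simp only [PiLp.add_apply, PiLp.smul_apply, smul_eq_mul]
    have hb' : b = 1 - a := by linarith
    subst hb'
    rcases ha.eq_or_lt with rfl | ha'
    · linarith
    · have h1 := mul_lt_mul_of_pos_left hy ha'
      have h2 := mul_le_mul_of_nonneg_left hz.le hb
      linarith

theorem infDist_le_of_direction {ε p q : ℝ} (hε : 0 < ε) (hpq : p ^ 2 + q ^ 2 = 1)
    (hp : p ≤ ε / 2) {x : EuclideanSpace ℝ (Fin 2)} (hx : x ∈ S ε) :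
    Metric.infDist x (S ε)ᶜ ≤ 1 + ε - ((x 0 + 1) * p + x 1 * q) := by
  have hx' := S_subset_halfPlane hε hpq hp hx
  simp only [Set.mem_ofPred_eq] at hx'
  obtain ⟨t, ht⟩ : ∃ t, t = 1 + ε - ((x 0 + 1) * p + x 1 * q) := ⟨_, rfl⟩
  rw [← ht]
  -- The orthogonal projection of `x` onto the bounding line of the half-plane.
  have hmem : pt (x 0 + t * p) (x 1 + t * q) ∈ (S ε)ᶜ := by
    intro h
    have := S_subset_halfPlane hε hpq hp h
    simp only [Set.mem_ofPred_eq, pt, WithLp.equiv_symm_apply, Matrix.cons_val_zero,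
      Matrix.cons_val_one] at this
    have h2 : t * (p ^ 2 + q ^ 2) = t := by rw [hpq, mul_one]
    nlinarith
  refine (Metric.infDist_le_dist_of_mem hmem).trans ?_
  rw [EuclideanSpace.dist_eq]
  apply Real.sqrt_le_iff.2 ⟨by linarith, ?_⟩
  simp only [pt, WithLp.equiv_symm_apply, Fin.sum_univ_two, Real.dist_eq, sq_abs,
    Matrix.cons_val_zero, Matrix.cons_val_one]
  have h2 : t ^ 2 * (p ^ 2 + q ^ 2) = t ^ 2 := by rw [hpq, mul_one]
  nlinarith

theorem exists_direction {ε a b : ℝ} (hε : 0 < ε) (h : a ≠ 0 ∨ b ≠ 0) :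
    ∃ p q : ℝ, p ^ 2 + q ^ 2 = 1 ∧ p ≤ ε / 2 ∧ 0 < a * p + b * q := by
  rcases lt_trichotomy b 0 with hb | rfl | hb
  · exact ⟨0, -1, by norm_num, by linarith, by linarith⟩
  · rcases lt_or_gt_of_ne (h.resolve_right (by simp)) with ha | ha
    · exact ⟨-1, 0, by norm_num, by linarith, by linarith⟩
    · have hm : 0 < min (ε / 2) 1 := lt_min (by linarith) one_pos
      have hm1 : min (ε / 2) 1 ≤ 1 := min_le_right _ _
      refine ⟨min (ε / 2) 1, √(1 - min (ε / 2) 1 ^ 2), ?_, min_le_left _ _, ?_⟩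
      · rw [Real.sq_sqrt (by nlinarith)]
        ring
      · rw [zero_mul, add_zero]
        exact mul_pos ha hm
  · exact ⟨0, 1, by norm_num, by linarith, by linarith⟩

theorem infDist_lt {ε : ℝ} (hε : 0 < ε) {x : EuclideanSpace ℝ (Fin 2)} (hx : x ∈ S ε)
    (hne : x ≠ pt (-1) 0) : Metric.infDist x (S ε)ᶜ < 1 + ε := by
  have h : x 0 + 1 ≠ 0 ∨ x 1 ≠ 0 := by
    by_contra! hc
    apply hne
    ext i
    fin_cases i
    · simp [pt]
      linarith [hc.1]
    · simpa [pt] using hc.2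
  obtain ⟨p, q, hpq, hp, hpos⟩ := exists_direction hε h
  linarith [infDist_le_of_direction hε hpq hp hx]

theorem center_mem {ε : ℝ} (hε : 0 < ε) : pt (-1) 0 ∈ S ε :=
  subset_convexHull ℝ _ (Or.inl (Metric.mem_ball_self (by linarith)))

theorem infDist_center {ε : ℝ} (hε : 0 < ε) :
    Metric.infDist (pt (-1) 0) (S ε)ᶜ = 1 + ε := by
  apply le_antisymm
  · have := infDist_le_of_direction (p := 0) (q := 1) hε (by norm_num) (by linarith)
      (center_mem hε)
    simpa [pt] using this
  -- Nonemptiness of the complement matters here: `infDist` to the empty set is `0`.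
  · have hne : ((S ε)ᶜ).Nonempty := by
      refine ⟨pt 0 (1 + ε), fun h => ?_⟩
      have := S_subset_halfPlane (p := 0) (q := 1) hε (by norm_num) (by linarith) h
      simp [pt] at this
    rw [Metric.le_infDist hne]
    intro y hy
    by_contra! hlt
    exact hy (subset_convexHull ℝ _ (Or.inl (by rwa [Metric.mem_ball, dist_comm])))

theorem stmt_6 (ε : ℝ) (hε : 0 < ε) :
    {x ∈ S ε | Metric.infDist x (S ε)ᶜ = 1 + ε} = {pt (-1) 0} ∧
      ∀ x ∈ S ε, x ≠ pt (-1) 0 → Metric.infDist x (S ε)ᶜ < 1 + ε := by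
  refine ⟨?_, fun x hx hne => infDist_lt hε hx hne⟩
  ext x
  simp only [Set.mem_ofPred_eq, Set.mem_singleton_iff]
  constructor
  · rintro ⟨hx, hd⟩
    by_contra hne
    exact (infDist_lt hε hx hne).ne hd
  · rintro rfl
    exact ⟨center_mem hε, infDist_center hε⟩
end

section
/- The high ridge of the stadium S_0 is the closed segment from (-1,0) to (1,0); that is, {x ∈ S_0 : infDist(x, S_0ᶜ) = 1} = {(t,0) : t ∈ [-1,1]}. -/
/-- The closed segment from `(-1, 0)` to `(1, 0)`. -/
noncomputable def L : Set (EuclideanSpace ℝ (Fin 2)) := segment ℝ (pt (-1) 0) (pt 1 0)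

@[simp] lemma pt_zero (a b : ℝ) : pt a b 0 = a := by simp [pt]

@[simp] lemma pt_one (a b : ℝ) : pt a b 1 = b := by simp [pt]

lemma pt_eta (x : EuclideanSpace ℝ (Fin 2)) : pt (x 0) (x 1) = x := by
  ext i
  fin_cases i <;> simp

lemma dist_pt (x : EuclideanSpace ℝ (Fin 2)) (a b : ℝ) :
    dist x (pt a b) = Real.sqrt ((x 0 - a) ^ 2 + (x 1 - b) ^ 2) := by
  simp [EuclideanSpace.dist_eq, Fin.sum_univ_two, Real.dist_eq, sq_abs]

lemma mem_S_bounds {x : EuclideanSpace ℝ (Fin 2)} (hx : x ∈ S 0) :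
    (-2 < x 0 ∧ x 0 < 2) ∧ (-1 < x 1 ∧ x 1 < 1) := by
  have hconv : Convex ℝ {x : EuclideanSpace ℝ (Fin 2) |
      (-2 < x 0 ∧ x 0 < 2) ∧ (-1 < x 1 ∧ x 1 < 1)} := by
    have h0 := (convex_Ioo (-2 : ℝ) 2).linear_preimage
      (EuclideanSpace.proj (0 : Fin 2) : EuclideanSpace ℝ (Fin 2) →L[ℝ] ℝ).toLinearMap
    have h1 := (convex_Ioo (-1 : ℝ) 1).linear_preimage
      (EuclideanSpace.proj (1 : Fin 2) : EuclideanSpace ℝ (Fin 2) →L[ℝ] ℝ).toLinearMap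
    exact h0.inter h1
  refine convexHull_min ?_ hconv hx
  rintro y (hy | hy)
  all_goals
    rw [Metric.mem_ball, dist_pt, Real.sqrt_lt' (by norm_num)] at hy
    refine ⟨⟨?_, ?_⟩, ?_, ?_⟩ <;>
      nlinarith [sq_nonneg (y 0 - 1), sq_nonneg (y 0 + 1), sq_nonneg (y 1)]

lemma ball_subset_S_s7 {t : ℝ} (ht : t ∈ Set.Icc (-1 : ℝ) 1) : Metric.ball (pt t 0) 1 ⊆ S 0 := by
  intro x hx
  rw [Metric.mem_ball, dist_pt] at hx
  have h1 : pt (-1 + (x 0 - t)) (x 1) ∈ S 0 := by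
    refine subset_convexHull ℝ _ (Or.inl ?_)
    rw [Metric.mem_ball, dist_pt]
    simpa using hx
  have h2 : pt (1 + (x 0 - t)) (x 1) ∈ S 0 := by
    refine subset_convexHull ℝ _ (Or.inr ?_)
    rw [Metric.mem_ball, dist_pt]
    simpa using hx
  have hS : Convex ℝ (S 0) := convex_convexHull ℝ _
  have h := hS h1 h2 (a := (1 - t) / 2) (b := (1 + t) / 2)
    (by linarith [ht.2]) (by linarith [ht.1]) (by ring)
  convert h using 1
  ext i
  fin_cases i
  · simp
    ring
  · simp
    ring

theorem stmt_7 :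
    {x ∈ S 0 | Metric.infDist x (S 0)ᶜ = 1} = (fun t : ℝ => pt t 0) '' Set.Icc (-1 : ℝ) 1 := by
  ext x
  constructor
  · rintro ⟨hx, hd⟩
    obtain ⟨⟨hl, hr⟩, hb, ht⟩ := mem_S_bounds hx
    have key (a b : ℝ) (h : pt a b ∉ S 0) : 1 ≤ Real.sqrt ((x 0 - a) ^ 2 + (x 1 - b) ^ 2) := by
      rw [← hd, ← dist_pt]
      exact Metric.infDist_le_dist_of_mem h
    -- compare with the projections of `x` to the four sides of the rectangle
    have e1 := key 2 (x 1) (fun h => by have := mem_S_bounds h; simp at this)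
    have e2 := key (-2) (x 1) (fun h => by have := mem_S_bounds h; simp at this)
    have e3 := key (x 0) 1 (fun h => by have := mem_S_bounds h; simp at this)
    have e4 := key (x 0) (-1) (fun h => by have := mem_S_bounds h; simp at this)
    rw [Real.one_le_sqrt] at e1 e2 e3 e4
    have h0 : x 1 = 0 := by apply le_antisymm <;> nlinarith
    refine ⟨x 0, ⟨by nlinarith, by nlinarith⟩, ?_⟩
    rw [← h0]
    exact pt_eta x
  · rintro ⟨t, ht, rfl⟩
    have hout : pt t 1 ∈ (S 0)ᶜ := fun h => by have := mem_S_bounds h; simp at this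
    refine ⟨ball_subset_S_s7 ht (Metric.mem_ball_self one_pos), le_antisymm ?_ ?_⟩
    · refine (Metric.infDist_le_dist_of_mem hout).trans ?_
      simp [dist_pt]
    · refine (Metric.le_infDist ⟨_, hout⟩).2 fun y hy => ?_
      by_contra! h
      exact hy (ball_subset_S_s7 ht (by rwa [Metric.mem_ball, dist_comm]))
end

section
/- For every x in the stadium S_0, the distance from x to the complement of S_0 equals 1 minus the distance from x to the segment L; that is, infDist(x, S_0ᶜ) = 1 − infDist(x, L) for all x ∈ S_0. -/
open scoped Pointwise

open Metric in
theorem S_zero_eq_thickening : S 0 = thickening 1 L := by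
  have h : ball (pt (-1) 0) (1 + 0) ∪ ball (pt 1 0) 1
      = ({pt (-1) 0, pt 1 0} : Set (EuclideanSpace ℝ (Fin 2))) + ball 0 1 := by
    rw [add_ball_zero, thickening_eq_biUnion_ball]
    simp
  rw [S, h, convexHull_add, convexHull_pair, (convex_ball _ _).convexHull_eq, add_ball_zero, L]

theorem L_snd {y : EuclideanSpace ℝ (Fin 2)} (hy : y ∈ L) : y 1 = 0 := by
  obtain ⟨a, b, -, -, -, rfl⟩ := hy
  simp [pt]

theorem L_nonempty : L.Nonempty := ⟨_, left_mem_segment ℝ _ _⟩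

theorem L_isCompact : IsCompact L := by
  rw [L, ← convexHull_pair]
  exact (Set.toFinite _).isCompact_convexHull ℝ

/-- Every point `x` of the plane lies on a ray leaving `L` from a nearest point `p` in the direction
of a unit outer normal `u` of `L` at `p`. -/
theorem exists_outer_normal (x : EuclideanSpace ℝ (Fin 2)) :
    ∃ p ∈ L, ∃ u : EuclideanSpace ℝ (Fin 2), ‖u‖ = 1 ∧ x - p = Metric.infDist x L • u ∧
      ∀ y ∈ L, inner ℝ u (y - p) ≤ 0 := by
  obtain ⟨p, hp, hd⟩ := L_isCompact.exists_infDist_eq_dist L_nonempty x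
  refine ⟨p, hp, ?_⟩
  rw [hd]
  by_cases hxp : x = p
  · -- On `L` itself the vertical direction is normal, including at the endpoints.
    refine ⟨pt 0 1, ?_, by simp [hxp], fun y hy => ?_⟩
    · simp [pt, EuclideanSpace.norm_eq]
    · simp [pt, PiLp.inner_apply, L_snd hy, L_snd hp]
  · have hpos : 0 < ‖x - p‖ := norm_pos_iff.mpr (sub_ne_zero.mpr hxp)
    have hinner := (norm_eq_iInf_iff_real_inner_le_zero (convex_segment _ _) hp (u := x)).1 (by
      rw [← dist_eq_norm, ← hd, Metric.infDist_eq_iInf]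
      simp only [dist_eq_norm]
      rfl)
    refine ⟨‖x - p‖⁻¹ • (x - p), ?_, ?_, fun y hy => ?_⟩
    · rw [norm_smul, norm_inv, norm_norm, inv_mul_cancel₀ hpos.ne']
    · rw [dist_eq_norm, smul_smul, mul_inv_cancel₀ hpos.ne', one_smul]
    · rw [real_inner_smul_left]
      exact mul_nonpos_of_nonneg_of_nonpos (inv_nonneg.mpr hpos.le) (hinner y hy)

theorem stmt_9 : ∀ x ∈ S 0, Metric.infDist x (S 0)ᶜ = 1 - Metric.infDist x L := by
  intro x hx
  have mem_S : ∀ z, z ∈ S 0 ↔ ∃ y ∈ L, dist z y < 1 := fun z => by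
    rw [S_zero_eq_thickening, Metric.mem_thickening_iff]
  have hd1 : Metric.infDist x L < 1 := (Metric.infDist_lt_iff L_nonempty).2 ((mem_S x).1 hx)
  obtain ⟨p, hp, u, hu, hxp, hn⟩ := exists_outer_normal x
  have hz : p + u ∈ (S 0)ᶜ := by
    intro hmem
    obtain ⟨y, hy, hlt⟩ := (mem_S _).1 hmem
    -- Cauchy-Schwarz against `u` bounds the distance from `p + u` to `y` below by `1`.
    have h1 : inner ℝ u (p + u - y) ≤ ‖u‖ * ‖p + u - y‖ := real_inner_le_norm _ _
    have h2 : inner ℝ u (p + u - y) = 1 - inner ℝ u (y - p) := by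
      rw [show p + u - y = u - (y - p) by abel, inner_sub_right, real_inner_self_eq_norm_sq, hu]
      norm_num
    have h3 := hn y hy
    rw [dist_eq_norm] at hlt
    rw [hu, one_mul] at h1
    linarith
  apply le_antisymm
  · refine (Metric.infDist_le_dist_of_mem hz).trans_eq ?_
    have h : x - (p + u) = (Metric.infDist x L - 1) • u := by
      rw [sub_smul, ← hxp, one_smul]
      abel
    rw [dist_eq_norm, h, norm_smul, hu, mul_one, Real.norm_eq_abs, abs_of_neg (by linarith)]
    ring
  · refine (Metric.le_infDist ⟨_, hz⟩).2 fun z hzS => ?_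
    have h1 : 1 ≤ Metric.infDist z L := by
      by_contra! hlt
      exact hzS ((mem_S z).2 ((Metric.infDist_lt_iff L_nonempty).1 hlt))
    have h2 : Metric.infDist z L ≤ Metric.infDist x L + dist z x := Metric.infDist_le_infDist_add_dist
    rw [dist_comm] at h2
    linarith
end

section
/- For every ε with 0 ≤ ε < 2, the distance from the point (1,0) to the complement of S_ε equals 1; that is, infDist((1,0), S_εᶜ) = 1. -/
lemma apply_zero_lt_of_mem_ball {a r : ℝ} {x : EuclideanSpace ℝ (Fin 2)}
    (hx : x ∈ Metric.ball (pt a 0) r) : x 0 < a + r := by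
  have h1 : ‖(x - pt a 0) 0‖ ≤ ‖x - pt a 0‖ := PiLp.norm_apply_le _ 0
  rw [Metric.mem_ball, dist_eq_norm] at hx
  have h2 : (x - pt a 0) 0 = x 0 - a := by simp [pt]
  rw [h2, Real.norm_eq_abs] at h1
  linarith [le_abs_self (x 0 - a)]

lemma S_subset_halfPlane_s10 {ε : ℝ} (hε2 : ε < 2) : S ε ⊆ {x | x 0 < 2} := by
  refine convexHull_min ?_ ?_
  · rintro x (hx | hx)
    · have := apply_zero_lt_of_mem_ball hx
      simp only [Set.mem_setOf_eq]
      linarith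
    · have := apply_zero_lt_of_mem_ball hx
      simp only [Set.mem_setOf_eq]
      linarith
  · exact convex_halfSpace_lt (f := fun x : EuclideanSpace ℝ (Fin 2) => x 0)
      ⟨fun _ _ => rfl, fun _ _ => rfl⟩ 2

theorem stmt_10 (ε : ℝ) (hε0 : 0 ≤ ε) (hε2 : ε < 2) :
    Metric.infDist (pt 1 0) (S ε)ᶜ = 1 := by
  have hmem : pt 2 0 ∈ (S ε)ᶜ := fun h => by
    have := S_subset_halfPlane_s10 hε2 h
    simp [pt] at this
  apply le_antisymm
  · refine (Metric.infDist_le_dist_of_mem hmem).trans (le_of_eq ?_)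
    simp [pt, EuclideanSpace.dist_eq, Real.dist_eq]
    norm_num
  · rw [Metric.le_infDist ⟨_, hmem⟩]
    intro y hy
    by_contra! h
    exact hy (subset_convexHull ℝ _ (Or.inr (by rwa [Metric.mem_ball, dist_comm])))
end

section
/- For every ε ≥ 0, one has the sandwich S_0 ⊆ S_ε ⊆ {x ∈ ℝ² : infDist(x, S_0) < ε} ∪ S_0; that is, S_0 is contained in S_ε, and S_ε is contained in the open ε-neighborhood of S_0 (understood as S_0 itself when ε = 0). -/
theorem stmt_11 (ε : ℝ) (hε : 0 ≤ ε) :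
    S 0 ⊆ S ε ∧
      S ε ⊆ {x : EuclideanSpace ℝ (Fin 2) | Metric.infDist x (S 0) < ε} ∪ S 0 := by
  have hball {r : ℝ} (hr : 0 ≤ r) :
      Metric.ball (pt (-1) 0) (1 + 0) ⊆ Metric.ball (pt (-1) 0) (1 + r) :=
    Metric.ball_subset_ball (by linarith)
  refine ⟨convexHull_mono (Set.union_subset_union_left _ (hball hε)), ?_⟩
  rcases hε.eq_or_lt with rfl | hpos
  · exact Set.subset_union_right
  -- For `ε > 0` the open thickening of `S 0` is convex, so it suffices to place both balls in it.
  have hsub : Metric.ball (pt (-1) 0) (1 + 0) ∪ Metric.ball (pt 1 0) 1 ⊆ S 0 :=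
    subset_convexHull ℝ _
  have hne : (S 0).Nonempty := ⟨pt 1 0, hsub (Or.inr (Metric.mem_ball_self one_pos))⟩
  have hthick : S ε ⊆ Metric.thickening ε (S 0) := by
    refine convexHull_min (Set.union_subset ?_ ?_) ((convex_convexHull ℝ _).thickening ε)
    · have h := Metric.thickening_subset_of_subset ε (Set.subset_union_left.trans hsub)
      rwa [thickening_ball hpos (by norm_num), add_zero, add_comm] at h
    · exact (Set.subset_union_right.trans hsub).trans (Metric.self_subset_thickening hpos _)
  exact fun x hx => Or.inl ((Metric.mem_thickening_iff_infDist_lt hne).1 (hthick hx))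
end

section
/- For every ε ≥ 0 and every x ∈ ℝ², the distance functions to the complements of S_ε and of S_0 differ by at most ε: 0 ≤ infDist(x, S_εᶜ) − infDist(x, S_0ᶜ) ≤ ε. In particular, the distance function of S_ε converges uniformly on ℝ² to the distance function of the stadium S_0 as ε → 0. -/
open Metric

lemma S_zero_subset {ε : ℝ} (hε : 0 ≤ ε) : S 0 ⊆ S ε :=
  convexHull_mono (Set.union_subset_union_left _ (ball_subset_ball (by linarith)))

lemma nonempty_compl_S (ε : ℝ) : (S ε)ᶜ.Nonempty := by
  rw [Set.nonempty_compl]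
  intro h
  have hb : Bornology.IsBounded (S ε) :=
    isBounded_convexHull.2 (isBounded_ball.union isBounded_ball)
  rw [h] at hb
  exact NormedSpace.unbounded_univ ℝ (EuclideanSpace ℝ (Fin 2)) hb

lemma isOpen_S (ε : ℝ) : IsOpen (S ε) :=
  (isOpen_ball.union isOpen_ball).convexHull

/-- If `S 0` lies in the half-plane `⟪u, ·⟫ < c`, then `S ε` lies in that half-plane pushed
outward by `ε`. -/
lemma inner_lt_of_mem_S {ε : ℝ} (hε : 0 ≤ ε) {u : EuclideanSpace ℝ (Fin 2)} {c : ℝ}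
    (h : ∀ z ∈ S 0, inner ℝ u z < c) {w : EuclideanSpace ℝ (Fin 2)} (hw : w ∈ S ε) :
    inner ℝ u w < c + ε * ‖u‖ := by
  have hconv : Convex ℝ {w : EuclideanSpace ℝ (Fin 2) | inner ℝ u w < c + ε * ‖u‖} :=
    convex_halfSpace_lt (innerSL ℝ u).toLinearMap.isLinear _
  refine convexHull_min ?_ hconv hw
  rintro v (hv | hv)
  · set p := pt (-1) 0
    -- Shrinking the large ball onto the unit ball about `p` moves points by at most `ε`.
    have hpos : 0 < 1 + ε := by linarith
    have hv' : ‖v - p‖ < 1 + ε := by rwa [mem_ball, dist_eq_norm] at hv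
    have hz : p + (1 + ε)⁻¹ • (v - p) ∈ S 0 := by
      refine subset_convexHull ℝ _ (Or.inl ?_)
      rw [mem_ball, dist_eq_norm, add_sub_cancel_left, norm_smul,
        Real.norm_of_nonneg (by positivity), add_zero, inv_mul_lt_iff₀ hpos, mul_one]
      exact hv'
    have h1 := h _ hz
    have h2 : inner ℝ u v = inner ℝ u (p + (1 + ε)⁻¹ • (v - p))
        + ε * (1 + ε)⁻¹ * inner ℝ u (v - p) := by
      simp only [inner_add_right, inner_smul_right, inner_sub_right]
      field_simp
      ring
    have h3 : inner ℝ u (v - p) ≤ ‖u‖ * (1 + ε) :=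
      (real_inner_le_norm _ _).trans (by gcongr)
    have h4 : ε * (1 + ε)⁻¹ * inner ℝ u (v - p) ≤ ε * ‖u‖ :=
      calc _ ≤ ε * (1 + ε)⁻¹ * (‖u‖ * (1 + ε)) := by gcongr
        _ = ε * ‖u‖ := by field_simp
    show inner ℝ u v < c + ε * ‖u‖
    linarith
  · have h1 := h v (subset_convexHull ℝ _ (Or.inr hv))
    have h2 : 0 ≤ ε * ‖u‖ := by positivity
    show inner ℝ u v < c + ε * ‖u‖
    linarith

lemma exists_notMem_S_dist_le {ε : ℝ} (hε : 0 ≤ ε) {y : EuclideanSpace ℝ (Fin 2)}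
    (hy : y ∉ S 0) : ∃ y' ∉ S ε, dist y y' ≤ ε := by
  obtain ⟨f, hf⟩ := geometric_hahn_banach_open_point (convex_convexHull ℝ _) (isOpen_S 0) hy
  set u := (InnerProductSpace.toDual ℝ _).symm f with hu
  have hfu : ∀ z, f z = inner ℝ u z := fun z => by simp [hu]
  simp only [hfu] at hf
  have hu0 : u ≠ 0 := by
    intro h0
    have := hf (pt 1 0) (subset_convexHull ℝ _ (Or.inr (mem_ball_self one_pos)))
    simp [h0] at this
  have hn : 0 < ‖u‖ := norm_pos_iff.2 hu0
  refine ⟨y + (ε / ‖u‖) • u, fun hmem => ?_, ?_⟩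
  · have h1 := inner_lt_of_mem_S hε hf hmem
    rw [inner_add_right, inner_smul_right, real_inner_self_eq_norm_sq] at h1
    have h2 : ε / ‖u‖ * ‖u‖ ^ 2 = ε * ‖u‖ := by field_simp
    linarith
  · rw [dist_self_add_right, norm_smul, Real.norm_of_nonneg (by positivity),
      div_mul_cancel₀ _ hn.ne']

lemma infDist_compl_S_bounds {ε : ℝ} (hε : 0 ≤ ε) (x : EuclideanSpace ℝ (Fin 2)) :
    0 ≤ infDist x (S ε)ᶜ - infDist x (S 0)ᶜ ∧ infDist x (S ε)ᶜ - infDist x (S 0)ᶜ ≤ ε := by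
  constructor
  · exact sub_nonneg.2 (infDist_le_infDist_of_subset
      (Set.compl_subset_compl.2 (S_zero_subset hε)) (nonempty_compl_S ε))
  · rw [sub_le_comm, le_infDist (nonempty_compl_S 0)]
    intro y hy
    obtain ⟨y', hy', hd⟩ := exists_notMem_S_dist_le hε hy
    have h1 : infDist x (S ε)ᶜ ≤ dist x y' := infDist_le_dist_of_mem hy'
    linarith [dist_triangle x y y']

theorem stmt_12 :
    (∀ ε : ℝ, 0 ≤ ε → ∀ x : EuclideanSpace ℝ (Fin 2),
        0 ≤ Metric.infDist x (S ε)ᶜ - Metric.infDist x (S 0)ᶜ ∧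
          Metric.infDist x (S ε)ᶜ - Metric.infDist x (S 0)ᶜ ≤ ε) ∧
      TendstoUniformly (fun (ε : ℝ) (x : EuclideanSpace ℝ (Fin 2)) => Metric.infDist x (S ε)ᶜ)
        (fun x => Metric.infDist x (S 0)ᶜ) (nhdsWithin 0 (Set.Ici 0)) := by
  refine ⟨fun ε hε x => infDist_compl_S_bounds hε x, ?_⟩
  rw [Metric.tendstoUniformly_iff]
  intro δ hδ
  filter_upwards [self_mem_nhdsWithin, mem_nhdsWithin_of_mem_nhds (Iio_mem_nhds hδ)] with ε hε hεδ x
  have hb := infDist_compl_S_bounds hε x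
  rw [dist_comm, Real.dist_eq, abs_of_nonneg hb.1]
  exact hb.2.trans_lt hεδ
end
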